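/- arXiv:1506.06253 — 3 statements merged into one kernel-verified Lean document; each statement's English description precedes it below -/
import Mathlib

section
/- Assume P does not lie on a median of ABC (a line joining a vertex to the midpoint of the opposite side). Then λ(P) = Q′ and λ(H) = Q; equivalently, T_P⁻¹(H) = T_{P′}⁻¹(Q). Moreover λ⁻¹(P′) = Q and λ⁻¹(H′) = Q′. -/
noncomputable section

/-- The real affine plane. -/
abbrev Pt : Type := ℝ × ℝ

/-- `u` and `v` are parallel vectors (the zero vector is parallel to everything). -/
def Par (u v : Pt) : Prop := ∃ t : ℝ, u = t • v ∨ v = t • u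

/-- The centroid of the triangle `ABC`. -/
def cent (A B C : Pt) : Pt := (3⁻¹ : ℝ) • (A + B + C)

/-- The homothety with center `Z` and ratio `r`. -/
def homoth (Z : Pt) (r : ℝ) (X : Pt) : Pt := Z + r • (X - Z)

/-- The value at `p` of the quadratic polynomial with coefficient vector `c`. -/
def qval (c : Fin 6 → ℝ) (p : Pt) : ℝ :=
  c 0 * p.1 ^ 2 + c 1 * p.1 * p.2 + c 2 * p.2 ^ 2 + c 3 * p.1 + c 4 * p.2 + c 5

/-- `S` is a conic: the zero locus of a real polynomial of total degree 2. -/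
def IsConic (S : Set Pt) : Prop :=
  ∃ c : Fin 6 → ℝ, ¬(c 0 = 0 ∧ c 1 = 0 ∧ c 2 = 0) ∧ S = {p | qval c p = 0}

/-- `Z` is a center of symmetry of `S`. -/
def IsCenterOf (Z : Pt) (S : Set Pt) : Prop :=
  ∀ p ∈ S, (2 : ℝ) • Z - p ∈ S

/-- The gradient at `p` of the quadratic polynomial with coefficients `c`. -/
def qgrad (c : Fin 6 → ℝ) (p : Pt) : Pt :=
  (2 * c 0 * p.1 + c 1 * p.2 + c 3, c 1 * p.1 + 2 * c 2 * p.2 + c 4)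

/-- The line through `X` and `Y`. -/
def lineThru (X Y : Pt) : Set Pt := {p | ∃ t : ℝ, p = X + t • (Y - X)}

/-- `L` is the tangent line at the nonsingular point `p` of the conic with coefficients `c`. -/
def IsTangentLineAt (c : Fin 6 → ℝ) (L : Set Pt) (p : Pt) : Prop :=
  qval c p = 0 ∧ qgrad c p ≠ 0 ∧
  L = {q | (qgrad c p).1 * (q.1 - p.1) + (qgrad c p).2 * (q.2 - p.2) = 0}

theorem Collinear.cross_eq_zero {X Y Z : ℝ × ℝ} (h : Collinear ℝ {X, Y, Z}) :
    (Y.1 - X.1) * (Z.2 - X.2) - (Y.2 - X.2) * (Z.1 - X.1) = 0 := by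
  obtain ⟨v, hv⟩ := (collinear_iff_of_mem (p₀ := X) (by simp)).1 h
  obtain ⟨s, rfl⟩ := hv Y (by simp)
  obtain ⟨t, rfl⟩ := hv Z (by simp)
  simp only [vadd_eq_add, Prod.fst_add, Prod.snd_add, Prod.smul_fst, Prod.smul_snd, smul_eq_mul]
  ring

theorem collinear_of_cross_eq_zero {X Y Z : ℝ × ℝ}
    (h : (Y.1 - X.1) * (Z.2 - X.2) - (Y.2 - X.2) * (Z.1 - X.1) = 0) :
    Collinear ℝ {X, Y, Z} := by
  by_cases hXY : Y = X
  · subst hXY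
    simpa using collinear_pair ℝ Y Z
  refine (collinear_iff_of_mem (p₀ := X) (by simp)).2 ⟨Y - X, ?_⟩
  have hZ : ∃ r : ℝ, Z = r • (Y - X) +ᵥ X := by
    by_cases h1 : Y.1 - X.1 = 0
    · have h2 : Y.2 - X.2 ≠ 0 := fun h2 =>
        hXY (Prod.ext (sub_eq_zero.1 h1) (sub_eq_zero.1 h2))
      refine ⟨(Z.2 - X.2) / (Y.2 - X.2), Prod.ext ?_ ?_⟩ <;> simp <;> field_simp <;> linarith
    · refine ⟨(Z.1 - X.1) / (Y.1 - X.1), Prod.ext ?_ ?_⟩ <;> simp <;> field_simp <;> linarith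
  simp only [Set.mem_insert_iff, Set.mem_singleton_iff, forall_eq_or_imp, forall_eq]
  exact ⟨⟨0, by simp⟩, ⟨1, by simp⟩, hZ⟩

/-- A nontrivial affine relation between three points makes them collinear. -/
theorem collinear_of_smul_add_eq_zero {A B C : ℝ × ℝ} {r s t : ℝ} (hr : r ≠ 0)
    (hsum : r + s + t = 0) (h : r • A + s • B + t • C = 0) : Collinear ℝ {A, B, C} := by
  apply collinear_of_cross_eq_zero
  have h₁ := congrArg Prod.fst h
  have h₂ := congrArg Prod.snd h
  simp only [Prod.fst_add, Prod.snd_add, Prod.smul_fst, Prod.smul_snd, smul_eq_mul,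
    Prod.fst_zero, Prod.snd_zero] at h₁ h₂
  obtain rfl : r = -s - t := by linarith
  apply mul_left_cancel₀ hr
  linear_combination (C.1 - B.1) * h₂ - (C.2 - B.2) * h₁

/-- The trace on `BC` of the point with barycentric coordinates `(x, y, z)`. -/
theorem trace_eq {A B C P D : ℝ × ℝ} {x y z : ℝ} (hABC : ¬ Collinear ℝ {A, B, C})
    (hsum : x + y + z = 1) (hP : P = x • A + y • B + z • C) (hyz : y + z ≠ 0)
    (h₁ : Collinear ℝ {A, P, D}) (h₂ : Collinear ℝ {B, C, D}) :
    D = (y / (y + z)) • B + (z / (y + z)) • C := by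
  have hdet := mt collinear_of_cross_eq_zero hABC
  have e₁ := h₁.cross_eq_zero
  have e₂ := h₂.cross_eq_zero
  obtain ⟨A₁, A₂⟩ := A
  obtain ⟨B₁, B₂⟩ := B
  obtain ⟨C₁, C₂⟩ := C
  obtain ⟨D₁, D₂⟩ := D
  subst hP
  obtain rfl : x = 1 - y - z := by linarith
  simp only [Prod.fst_add, Prod.snd_add, Prod.smul_fst, Prod.smul_snd, smul_eq_mul] at hdet e₁ e₂
  ext
  · simp only [Prod.fst_add, Prod.smul_fst, smul_eq_mul]
    field_simp
    apply mul_left_cancel₀ hdet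
    linear_combination (C₁ - B₁) * e₁ - ((y * (B₁ - A₁)) + z * (C₁ - A₁)) * e₂
  · simp only [Prod.snd_add, Prod.smul_snd, smul_eq_mul]
    field_simp
    apply mul_left_cancel₀ hdet
    linear_combination (C₂ - B₂) * e₁ - ((y * (B₂ - A₂)) + z * (C₂ - A₂)) * e₂

theorem AffineEquiv.map_barycentric {V : Type*} [AddCommGroup V] [Module ℝ V] (T : V ≃ᵃ[ℝ] V)
    (A B C : V) {r s t : ℝ} (h : r + s + t = 1) :
    T (r • A + s • B + t • C) = r • T A + s • T B + t • T C := by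
  obtain rfl : r = 1 - s - t := by linarith
  have key : ∀ v, T v = T.linear v + T 0 := fun v => by
    simpa using T.map_vadd 0 v
  rw [key, key A, key B, key C]
  simp only [map_add, map_smul]
  module

theorem Par.exists_eq_smul {u v : Pt} (h : Par u v) (hv : v ≠ 0) : ∃ t : ℝ, u = t • v := by
  obtain ⟨t, h | h⟩ := h
  · exact ⟨t, h⟩
  · have ht : t ≠ 0 := by
      rintro rfl
      exact hv (by simpa using h)
    exact ⟨t⁻¹, by rw [h, smul_smul, inv_mul_cancel₀ ht, one_smul]⟩

/-- A vector which is a multiple of `D - Q`, `E - Q` and `F - Q` vanishes if `D`, `E`, `F` are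
not collinear. -/
theorem eq_zero_of_smul_of_not_collinear {D E F Q w : Pt} (h : ¬ Collinear ℝ {D, E, F})
    (hD : ∃ t : ℝ, w = t • (D - Q)) (hE : ∃ t : ℝ, w = t • (E - Q))
    (hF : ∃ t : ℝ, w = t • (F - Q)) : w = 0 := by
  by_contra hw
  have key : ∀ X : Pt, (∃ t : ℝ, w = t • (X - Q)) → ∃ r : ℝ, X = r • w +ᵥ Q := by
    rintro X ⟨t, ht⟩
    have ht0 : t ≠ 0 := by
      rintro rfl
      exact hw (by simpa using ht)
    exact ⟨t⁻¹, by rw [ht, smul_smul, inv_mul_cancel₀ ht0, one_smul]; simp⟩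
  refine h ((collinear_iff_exists_forall_eq_smul_vadd _).2 ⟨Q, w, ?_⟩)
  simp only [Set.mem_insert_iff, Set.mem_singleton_iff, forall_eq_or_imp, forall_eq]
  exact ⟨key D hD, key E hE, key F hF⟩

theorem homoth_cent_barycentric {A B C X Y : Pt} {x y z : ℝ} (hsum : x + y + z = 1)
    (hX : X = x • A + y • B + z • C) (hY : Y = homoth (cent A B C) (-(1 / 2)) X) :
    Y = ((y + z) / 2) • A + ((x + z) / 2) • B + ((x + y) / 2) • C := by
  obtain rfl : x = 1 - y - z := by linarith
  rw [hY, hX, homoth, cent]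
  match_scalars <;> ring

/-- The half of the theorem concerning `P`, with traces and `Q`, `Q'` in barycentric
coordinates: the other half follows by exchanging the roles of `P` and `P'`. -/
theorem lambda_apply_of_barycentric {A B C P Q Q' D E F D₃ E₃ F₃ H : Pt} {x y z : ℝ}
    (hABC : ¬ Collinear ℝ {A, B, C})
    (hsum : x + y + z = 1) (hP : P = x • A + y • B + z • C)
    (hx : x ≠ 0) (hy : y ≠ 0) (hz : z ≠ 0)
    (hyz : y + z ≠ 0) (hxz : x + z ≠ 0) (hxy : x + y ≠ 0)
    (hst : x * y + y * z + z * x ≠ 0)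
    (hQ : Q = (x * (y + z) / (2 * (x * y + y * z + z * x))) • A
      + (y * (x + z) / (2 * (x * y + y * z + z * x))) • B
      + (z * (x + y) / (2 * (x * y + y * z + z * x))) • C)
    (hQ' : Q' = ((y + z) / 2) • A + ((x + z) / 2) • B + ((x + y) / 2) • C)
    (hD : D = (y / (y + z)) • B + (z / (y + z)) • C)
    (hE : E = (x / (x + z)) • A + (z / (x + z)) • C)
    (hF : F = (x / (x + y)) • A + (y / (x + y)) • B)
    (hD₃ : D₃ = (z / (y + z)) • B + (y / (y + z)) • C)
    (hE₃ : E₃ = (z / (x + z)) • A + (x / (x + z)) • C)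
    (hF₃ : F₃ = (y / (x + y)) • A + (x / (x + y)) • B)
    (TP TP' : Pt ≃ᵃ[ℝ] Pt) (hTP : TP A = D ∧ TP B = E ∧ TP C = F)
    (hTP' : TP' A = D₃ ∧ TP' B = E₃ ∧ TP' C = F₃)
    (hH : Par (H - A) (D - Q) ∧ Par (H - B) (E - Q) ∧ Par (H - C) (F - Q)) :
    TP' (TP.symm P) = Q' ∧ TP' (TP.symm H) = Q := by
  obtain ⟨hTA, hTB, hTC⟩ := hTP
  obtain ⟨hTA', hTB', hTC'⟩ := hTP'
  have hDEF : ¬ Collinear ℝ {D, E, F} := by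
    rw [← affineIndependent_iff_not_collinear_set] at hABC ⊢
    have := hABC.map' TP.toAffineMap TP.injective
    convert this using 1
    ext i : 1
    fin_cases i <;> simp [hTA, hTB, hTC]
  constructor
  · have hsum' : (y + z) / 2 + (x + z) / 2 + (x + y) / 2 = 1 := by linarith
    have h₁ : TP Q' = P := by
      rw [hQ', TP.map_barycentric _ _ _ hsum', hTA, hTB, hTC, hD, hE, hF, hP]
      match_scalars <;> field_simp <;> ring
    have h₂ : TP' Q' = Q' := by
      rw [hQ', TP'.map_barycentric _ _ _ hsum', hTA', hTB', hTC', hD₃, hE₃, hF₃]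
      match_scalars <;> field_simp <;> ring
    rw [← h₁, TP.symm_apply_apply, h₂]
  · set σ := x * y + y * z + z * x with hσ
    set r := (y + z) * (y ^ 2 * (x + z) + z ^ 2 * (x + y) - x ^ 2 * (y + z)) / (4 * σ * (y * z))
      with hr
    set s := (x + z) * (x ^ 2 * (y + z) + z ^ 2 * (x + y) - y ^ 2 * (x + z)) / (4 * σ * (x * z))
      with hs
    set t := (x + y) * (x ^ 2 * (y + z) + y ^ 2 * (x + z) - z ^ 2 * (x + y)) / (4 * σ * (x * y))
      with ht
    have hrst : r + s + t = 1 := by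
      rw [hr, hs, ht]
      field_simp
      rw [hσ]
      ring
    have h₂ : TP' (r • A + s • B + t • C) = Q := by
      rw [TP'.map_barycentric _ _ _ hrst, hTA', hTB', hTC', hD₃, hE₃, hF₃, hQ, hr, hs, ht]
      match_scalars <;> field_simp <;> ring
    have h₁ : TP (r • A + s • B + t • C) = r • D + s • E + t • F := by
      rw [TP.map_barycentric _ _ _ hrst, hTA, hTB, hTC]
    set H₀ := r • D + s • E + t • F with hH₀
    have hA : H₀ - A = ((y + z) * (σ - x ^ 2) / (2 * (x * y * z))) • (D - Q) := by
      rw [hH₀, hQ, hD, hE, hF, hr, hs, ht]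
      match_scalars <;> field_simp <;> rw [hσ] <;> ring
    have hB : H₀ - B = ((x + z) * (σ - y ^ 2) / (2 * (x * y * z))) • (E - Q) := by
      rw [hH₀, hQ, hD, hE, hF, hr, hs, ht]
      match_scalars <;> field_simp <;> rw [hσ] <;> ring
    have hC : H₀ - C = ((x + y) * (σ - z ^ 2) / (2 * (x * y * z))) • (F - Q) := by
      rw [hH₀, hQ, hD, hE, hF, hr, hs, ht]
      match_scalars <;> field_simp <;> rw [hσ] <;> ring
    have hDQ : D - Q ≠ 0 := fun h => by
      refine hABC (collinear_of_smul_add_eq_zero (r := -(x * (y + z) / (2 * σ)))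
        (s := y / (y + z) - y * (x + z) / (2 * σ)) (t := z / (y + z) - z * (x + y) / (2 * σ))
        ?_ ?_ ?_)
      · exact neg_ne_zero.2 (div_ne_zero (mul_ne_zero hx hyz) (mul_ne_zero two_ne_zero hst))
      · field_simp
        rw [hσ]
        ring
      · rw [← h, hD, hQ]
        module
    have hEQ : E - Q ≠ 0 := fun h => by
      rw [Set.insert_comm] at hABC
      refine hABC (collinear_of_smul_add_eq_zero (r := -(y * (x + z) / (2 * σ)))
        (s := x / (x + z) - x * (y + z) / (2 * σ)) (t := z / (x + z) - z * (x + y) / (2 * σ))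
        ?_ ?_ ?_)
      · exact neg_ne_zero.2 (div_ne_zero (mul_ne_zero hy hxz) (mul_ne_zero two_ne_zero hst))
      · field_simp
        rw [hσ]
        ring
      · rw [← h, hE, hQ]
        module
    have hFQ : F - Q ≠ 0 := fun h => by
      rw [Set.pair_comm B C, Set.insert_comm A C] at hABC
      refine hABC (collinear_of_smul_add_eq_zero (r := -(z * (x + y) / (2 * σ)))
        (s := x / (x + y) - x * (y + z) / (2 * σ)) (t := y / (x + y) - y * (x + z) / (2 * σ))
        ?_ ?_ ?_)
      · exact neg_ne_zero.2 (div_ne_zero (mul_ne_zero hz hxy) (mul_ne_zero two_ne_zero hst))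
      · field_simp
        rw [hσ]
        ring
      · rw [← h, hF, hQ]
        module
    obtain ⟨a, ha⟩ := hH.1.exists_eq_smul hDQ
    obtain ⟨b, hb⟩ := hH.2.1.exists_eq_smul hEQ
    obtain ⟨c, hc⟩ := hH.2.2.exists_eq_smul hFQ
    have hHH₀ : H - H₀ = 0 := eq_zero_of_smul_of_not_collinear hDEF
      ⟨_, by rw [← sub_sub_sub_cancel_right H H₀ A, ha, hA, ← sub_smul]⟩
      ⟨_, by rw [← sub_sub_sub_cancel_right H H₀ B, hb, hB, ← sub_smul]⟩
      ⟨_, by rw [← sub_sub_sub_cancel_right H H₀ C, hc, hC, ← sub_smul]⟩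
    rw [sub_eq_zero.1 hHH₀, ← h₁, TP.symm_apply_apply, h₂]

theorem lambda_maps_P_to_Q'_and_H_to_Q
    (A B C P P' Q Q' D E F D₃ E₃ F₃ : Pt) (x y z : ℝ)
    (hABC : AffineIndependent ℝ ![A, B, C])
    (hsum : x + y + z = 1)
    (hPco : P = x • A + y • B + z • C)
    (hx0 : x ≠ 0) (hy0 : y ≠ 0) (hz0 : z ≠ 0)
    (hx1 : x ≠ 1) (hy1 : y ≠ 1) (hz1 : z ≠ 1)
    (hst : x * y + y * z + z * x ≠ 0)
    (hP' : P' = (y * z / (x * y + y * z + z * x)) • A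
        + (x * z / (x * y + y * z + z * x)) • B
        + (x * y / (x * y + y * z + z * x)) • C)
    (hQ : Q = homoth (cent A B C) (-(1 / 2)) P')
    (hQ' : Q' = homoth (cent A B C) (-(1 / 2)) P)
    (hD : Collinear ℝ {A, P, D} ∧ Collinear ℝ {B, C, D})
    (hE : Collinear ℝ {B, P, E} ∧ Collinear ℝ {A, C, E})
    (hF : Collinear ℝ {C, P, F} ∧ Collinear ℝ {A, B, F})
    (hD₃ : Collinear ℝ {A, P', D₃} ∧ Collinear ℝ {B, C, D₃})
    (hE₃ : Collinear ℝ {B, P', E₃} ∧ Collinear ℝ {A, C, E₃})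
    (hF₃ : Collinear ℝ {C, P', F₃} ∧ Collinear ℝ {A, B, F₃})
    (hxy : x ≠ y) (hyz : y ≠ z) (hxz : x ≠ z)
    (TP : Pt ≃ᵃ[ℝ] Pt) (hTP : TP A = D ∧ TP B = E ∧ TP C = F)
    (TP' : Pt ≃ᵃ[ℝ] Pt) (hTP' : TP' A = D₃ ∧ TP' B = E₃ ∧ TP' C = F₃)
    (O H : Pt)
    (hO : Par (midpoint ℝ B C - O) (D - Q) ∧ Par (midpoint ℝ C A - O) (E - Q) ∧
          Par (midpoint ℝ A B - O) (F - Q))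
    (hH : Par (H - A) (D - Q) ∧ Par (H - B) (E - Q) ∧ Par (H - C) (F - Q))
    (O' H' : Pt)
    (hO' : Par (midpoint ℝ B C - O') (D₃ - Q') ∧ Par (midpoint ℝ C A - O') (E₃ - Q') ∧
           Par (midpoint ℝ A B - O') (F₃ - Q'))
    (hH' : Par (H' - A) (D₃ - Q') ∧ Par (H' - B) (E₃ - Q') ∧ Par (H' - C) (F₃ - Q')) :
    TP' (TP.symm P) = Q' ∧ TP' (TP.symm H) = Q ∧ TP.symm H = TP'.symm Q ∧
    TP (TP'.symm P') = Q ∧ TP (TP'.symm H') = Q'  := by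
  have hncol : ¬ Collinear ℝ {A, B, C} := affineIndependent_iff_not_collinear_set.1 hABC
  have hncolB : ¬ Collinear ℝ {B, A, C} := by rwa [Set.insert_comm]
  have hncolC : ¬ Collinear ℝ {C, A, B} := by rwa [Set.insert_comm, Set.pair_comm]
  have hyz' : y + z ≠ 0 := fun h => hx1 (by linarith)
  have hxz' : x + z ≠ 0 := fun h => hy1 (by linarith)
  have hxy' : x + y ≠ 0 := fun h => hz1 (by linarith)
  set σ := x * y + y * z + z * x with hσ
  set x' := y * z / σ with hx'
  set y' := x * z / σ with hy'
  set z' := x * y / σ with hz'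
  have hx0' : x' ≠ 0 := div_ne_zero (mul_ne_zero hy0 hz0) hst
  have hy0' : y' ≠ 0 := div_ne_zero (mul_ne_zero hx0 hz0) hst
  have hz0' : z' ≠ 0 := div_ne_zero (mul_ne_zero hx0 hy0) hst
  have hsum' : x' + y' + z' = 1 := by
    rw [hx', hy', hz', ← add_div, ← add_div, div_eq_one_iff_eq hst]
    ring
  have hyz'' : y' + z' = x * (y + z) / σ := by rw [hy', hz']; ring
  have hxz'' : x' + z' = y * (x + z) / σ := by rw [hx', hz']; ring
  have hxy'' : x' + y' = z * (x + y) / σ := by rw [hx', hy']; ring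
  have hyz₀ : y' + z' ≠ 0 := hyz'' ▸ div_ne_zero (mul_ne_zero hx0 hyz') hst
  have hxz₀ : x' + z' ≠ 0 := hxz'' ▸ div_ne_zero (mul_ne_zero hy0 hxz') hst
  have hxy₀ : x' + y' ≠ 0 := hxy'' ▸ div_ne_zero (mul_ne_zero hz0 hxy') hst
  have hσ' : x' * y' + y' * z' + z' * x' = x * y * z / σ ^ 2 := by
    rw [hx', hy', hz']
    field_simp
    linear_combination hsum
  have hst' : x' * y' + y' * z' + z' * x' ≠ 0 := by
    rw [hσ']
    positivity
  have hPB : P = y • B + x • A + z • C := by rw [hPco]; module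
  have hPC : P = z • C + x • A + y • B := by rw [hPco]; module
  have hPB' : P' = y' • B + x' • A + z' • C := by rw [hP']; module
  have hPC' : P' = z' • C + x' • A + y' • B := by rw [hP']; module
  have dD := trace_eq hncol hsum hPco hyz' hD.1 hD.2
  have dE := trace_eq hncolB (by linarith) hPB hxz' hE.1 hE.2
  have dF := trace_eq hncolC (by linarith) hPC hxy' hF.1 hF.2
  have dD₃ := trace_eq hncol hsum' hP' hyz₀ hD₃.1 hD₃.2
  have dE₃ := trace_eq hncolB (by linarith) hPB' hxz₀ hE₃.1 hE₃.2
  have dF₃ := trace_eq hncolC (by linarith) hPC' hxy₀ hF₃.1 hF₃.2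
  have q₁ : y' / (y' + z') = z / (y + z) := by rw [hyz'', hy']; field_simp
  have q₂ : z' / (y' + z') = y / (y + z) := by rw [hyz'', hz']; field_simp
  have q₃ : x' / (x' + z') = z / (x + z) := by rw [hxz'', hx']; field_simp
  have q₄ : z' / (x' + z') = x / (x + z) := by rw [hxz'', hz']; field_simp
  have q₅ : x' / (x' + y') = y / (x + y) := by rw [hxy'', hx']; field_simp
  have q₆ : y' / (x' + y') = x / (x + y) := by rw [hxy'', hy']; field_simp
  have dQ : Q = ((y' + z') / 2) • A + ((x' + z') / 2) • B + ((x' + y') / 2) • C :=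
    homoth_cent_barycentric hsum' hP' hQ
  have dQ' : Q' = ((y + z) / 2) • A + ((x + z) / 2) • B + ((x + y) / 2) • C :=
    homoth_cent_barycentric hsum hPco hQ'
  obtain ⟨hP₁, hH₁⟩ := lambda_apply_of_barycentric (H := H) hncol hsum hPco
    hx0 hy0 hz0 hyz' hxz' hxy' hst
    (Q := Q) (by rw [dQ, hyz'', hxz'', hxy'', ← hσ]; match_scalars <;> field_simp) dQ' dD dE dF
    (by rw [dD₃, q₁, q₂]) (by rw [dE₃, q₃, q₄]) (by rw [dF₃, q₅, q₆]) TP TP' hTP hTP' hH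
  obtain ⟨hP₂, hH₂⟩ := lambda_apply_of_barycentric (H := H') hncol hsum' hP'
    hx0' hy0' hz0' hyz₀ hxz₀ hxy₀ hst'
    (Q := Q')
    (by
      rw [dQ', hσ', hyz'', hxz'', hxy'', hx', hy', hz']
      match_scalars <;> field_simp)
    dQ dD₃ dE₃ dF₃
    (by rw [dD, q₁, q₂]) (by rw [dE, q₃, q₄]) (by rw [dF, q₅, q₆]) TP' TP hTP' hTP hH'
  exact ⟨hP₁, hH₁, by rw [← hH₁, TP'.symm_apply_apply], hP₂, hH₂⟩
end
end

section
/- Assume P does not lie on a median of ABC (a line joining a vertex to the midpoint of the opposite side). Then the generalized orthocenter H of P and the generalized orthocenter H′ of P′ both lie on the conic C_P through A, B, C, P, Q. -/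
noncomputable section

/-- The cross product of two plane vectors. -/
def cross (p q : Pt) : ℝ := p.1 * q.2 - p.2 * q.1

lemma Par.cross_eq_zero {p q : Pt} (h : Par p q) : cross p q = 0 := by
  obtain ⟨t, rfl | rfl⟩ := h <;> simp [cross] <;> ring

lemma collinear_iff_cross {X Y Z : Pt} :
    Collinear ℝ {X, Y, Z} ↔ cross (Y - X) (Z - X) = 0 := by
  rw [collinear_iff_of_mem (p₀ := X) (by simp)]
  constructor
  · rintro ⟨d, hd⟩
    obtain ⟨r, rfl⟩ := hd Y (by simp)
    obtain ⟨t, rfl⟩ := hd Z (by simp)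
    simp [cross]
    ring
  · intro h
    by_cases hYX : Y = X
    · subst hYX
      refine ⟨Z - Y, ?_⟩
      rintro p (rfl | rfl | rfl)
      · exact ⟨0, by simp⟩
      · exact ⟨0, by simp⟩
      · exact ⟨1, by simp⟩
    · refine ⟨Y - X, ?_⟩
      rintro p (rfl | rfl | rfl)
      · exact ⟨0, by simp⟩
      · exact ⟨1, by simp⟩
      · simp only [cross, Prod.fst_sub, Prod.snd_sub] at h
        by_cases h₁ : Y.1 - X.1 = 0
        · have h₂ : Y.2 - X.2 ≠ 0 := fun h₂ ↦
            hYX (Prod.ext (sub_eq_zero.mp h₁) (sub_eq_zero.mp h₂))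
          refine ⟨(p.2 - X.2) / (Y.2 - X.2), Prod.ext ?_ ?_⟩ <;> simp <;> field_simp
          · linear_combination -h
          · ring
        · refine ⟨(p.1 - X.1) / (Y.1 - X.1), Prod.ext ?_ ?_⟩ <;> simp <;> field_simp
          · ring
          · linear_combination h

lemma cross_ne_zero_of_affineIndependent {A B C : Pt} (h : AffineIndependent ℝ ![A, B, C]) :
    cross (B - A) (C - A) ≠ 0 := by
  rwa [affineIndependent_iff_not_collinear_set, collinear_iff_cross] at h

lemma exists_barycentric {A B C : Pt} (h : cross (B - A) (C - A) ≠ 0) (X : Pt) :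
    ∃ u v w : ℝ, u + v + w = 1 ∧ X = u • A + v • B + w • C := by
  refine ⟨1 - cross (X - A) (C - A) / cross (B - A) (C - A)
      - cross (B - A) (X - A) / cross (B - A) (C - A),
    cross (X - A) (C - A) / cross (B - A) (C - A),
    cross (B - A) (X - A) / cross (B - A) (C - A), by ring, Prod.ext ?_ ?_⟩ <;>
  · simp only [Prod.fst_add, Prod.snd_add, Prod.smul_fst, Prod.smul_snd, smul_eq_mul]
    field_simp
    simp only [cross, Prod.fst_sub, Prod.snd_sub]
    ring

/-- The condition `AH ∥ QD`, in barycentric coordinates. -/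
lemma barycentric_of_par_trace {A B C D H P P' : Pt} {x y z x' y' z' u v w : ℝ}
    (hΔ : cross (B - A) (C - A) ≠ 0) (hsum : x + y + z = 1)
    (hP : P = x • A + y • B + z • C)
    (hsum' : x' + y' + z' = 1) (hP' : P' = x' • A + y' • B + z' • C)
    (hy' : (x * y + y * z + z * x) * y' = z * x) (hz' : (x * y + y * z + z * x) * z' = x * y)
    (hD : Collinear ℝ {A, P, D} ∧ Collinear ℝ {B, C, D})
    (huvw : u + v + w = 1) (hH : H = u • A + v • B + w • C)
    (hpar : Par (H - A) (D - homoth (cent A B C) (-(1 / 2)) P')) :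
    v * (z * (x * y + y * z + z * x - y ^ 2)) = w * (y * (x * y + y * z + z * x - z ^ 2)) := by
  obtain ⟨d, e, f, hdef, rfl⟩ := exists_barycentric hΔ D
  have h₁ := collinear_iff_cross.mp hD.1
  have h₂ := collinear_iff_cross.mp hD.2
  have h₃ := hpar.cross_eq_zero
  subst hP hP' hH
  obtain rfl : x = 1 - y - z := by linarith
  obtain rfl : x' = 1 - y' - z' := by linarith
  obtain rfl : u = 1 - v - w := by linarith
  obtain rfl : d = 1 - e - f := by linarith
  have hef : y * f - z * e = 0 := by
    refine (mul_eq_zero.mp ?_).resolve_right hΔ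
    rw [← h₁]
    simp [cross]
    ring
  have hd : 1 - e - f = 0 := by
    refine (mul_eq_zero.mp ?_).resolve_right hΔ
    rw [← h₂]
    simp [cross]
    ring
  have hvw : v * (2 * f - (1 - z')) - w * (2 * e - (1 - y')) = 0 := by
    refine (mul_eq_zero.mp ?_).resolve_right hΔ
    rw [← (mul_eq_zero_iff_left (two_ne_zero' ℝ)).mpr h₃]
    simp [cross, homoth, cent]
    ring
  obtain rfl : e = 1 - f := by linarith
  have hf : (y + z) * f = z := by linear_combination hef
  linear_combination ((1 - y - z) * y + y * z + z * (1 - y - z)) * (y + z) * hvw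
    - 2 * ((1 - y - z) * y + y * z + z * (1 - y - z)) * (v + w) * hf
    - v * (y + z) * hz' + w * (y + z) * hy'

/-- The conditions `AH ∥ QD`, `BH ∥ QE`, `CH ∥ QF` defining the generalized orthocenter,
in barycentric coordinates. -/
lemma barycentric_orthocenter {A B C D E F H P P' Q : Pt} {x y z x' y' z' u v w : ℝ}
    (hΔ : cross (B - A) (C - A) ≠ 0) (hsum : x + y + z = 1)
    (hP : P = x • A + y • B + z • C)
    (hsum' : x' + y' + z' = 1) (hP' : P' = x' • A + y' • B + z' • C)
    (hx' : (x * y + y * z + z * x) * x' = y * z)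
    (hy' : (x * y + y * z + z * x) * y' = z * x)
    (hz' : (x * y + y * z + z * x) * z' = x * y)
    (hQ : Q = homoth (cent A B C) (-(1 / 2)) P')
    (hD : Collinear ℝ {A, P, D} ∧ Collinear ℝ {B, C, D})
    (hE : Collinear ℝ {B, P, E} ∧ Collinear ℝ {A, C, E})
    (hF : Collinear ℝ {C, P, F} ∧ Collinear ℝ {A, B, F})
    (huvw : u + v + w = 1) (hH : H = u • A + v • B + w • C)
    (hpar : Par (H - A) (D - Q) ∧ Par (H - B) (E - Q) ∧ Par (H - C) (F - Q)) :
    v * (z * (x * y + y * z + z * x - y ^ 2)) = w * (y * (x * y + y * z + z * x - z ^ 2)) ∧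
    w * (x * (x * y + y * z + z * x - z ^ 2)) = u * (z * (x * y + y * z + z * x - x ^ 2)) ∧
    u * (y * (x * y + y * z + z * x - x ^ 2)) = v * (x * (x * y + y * z + z * x - y ^ 2)) := by
  have rot (X Y W : Pt) : X + Y + W = Y + W + X := by abel
  have hΔB : cross (C - B) (A - B) ≠ 0 := by
    convert hΔ using 1
    simp only [cross, Prod.fst_sub, Prod.snd_sub]
    ring
  have hΔC : cross (A - C) (B - C) ≠ 0 := by
    convert hΔ using 1
    simp only [cross, Prod.fst_sub, Prod.snd_sub]
    ring
  have centB : cent B C A = cent A B C := by rw [cent, cent, rot A B C]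
  have centC : cent C A B = cent A B C := by rw [cent, cent, rot C A B]
  subst hQ
  refine ⟨barycentric_of_par_trace hΔ hsum hP hsum' hP' hy' hz' hD huvw hH hpar.1, ?_, ?_⟩
  · have := barycentric_of_par_trace (x := y) (y := z) (z := x) (x' := y') (y' := z')
      (z' := x') (u := v) (v := w) (w := u) hΔB (by linarith) (hP.trans (rot _ _ _))
      (by linarith) (hP'.trans (rot _ _ _)) (by linarith) (by linarith)
      ⟨hE.1, by rw [Set.insert_comm]; exact hE.2⟩ (by linarith) (hH.trans (rot _ _ _))
      (by rw [centB]; exact hpar.2.1)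
    linear_combination this
  · have := barycentric_of_par_trace (x := z) (y := x) (z := y) (x' := z') (y' := x')
      (z' := y') (u := w) (v := u) (w := v) hΔC (by linarith) (hP.trans (rot _ _ _).symm)
      (by linarith) (hP'.trans (rot _ _ _).symm) (by linarith) (by linarith)
      hF (by linarith) (hH.trans (rot _ _ _).symm)
      (by rw [centC]; exact hpar.2.2)
    linear_combination this

/-- A quadratic polynomial vanishing at `A`, `B`, `C`, in barycentric coordinates. -/
lemma exists_circumconic_coeffs {c : Fin 6 → ℝ} {A B C : Pt}
    (hA : qval c A = 0) (hB : qval c B = 0) (hC : qval c C = 0) :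
    ∃ α β γ : ℝ, ∀ u v w : ℝ, u + v + w = 1 →
      qval c (u • A + v • B + w • C) = α * (v * w) + β * (w * u) + γ * (u * v) := by
  let polar (X Y : Pt) : ℝ := 2 * c 0 * X.1 * Y.1 + c 1 * (X.1 * Y.2 + X.2 * Y.1)
    + 2 * c 2 * X.2 * Y.2 + c 3 * (X.1 + Y.1) + c 4 * (X.2 + Y.2) + 2 * c 5
  refine ⟨polar B C, polar C A, polar A B, fun u v w h ↦ ?_⟩
  obtain rfl : u = 1 - v - w := by linarith
  simp only [qval, Prod.fst_add, Prod.snd_add, Prod.smul_fst, Prod.smul_snd, smul_eq_mul,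
    polar] at *
  linear_combination (1 - v - w) ^ 2 * hA + v ^ 2 * hB + w ^ 2 * hC

/-- The circumconic through `P = (x : y : z)` and `Q = (x(y+z) : y(z+x) : z(x+y))` is
`x(z² - y²)vw + y(x² - z²)wu + z(y² - x²)uv = 0`. -/
lemma circumconic_eq_zero {x y z α β γ u v w : ℝ} (hx : x ≠ 0) (hy : y ≠ 0) (hz : z ≠ 0)
    (hyz : z ^ 2 - y ^ 2 ≠ 0)
    (hP : α * (y * z) + β * (z * x) + γ * (x * y) = 0)
    (hQ : α * (y * (z + x) * (z * (x + y))) + β * (z * (x + y) * (x * (y + z)))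
      + γ * (x * (y + z) * (y * (z + x))) = 0)
    (h : x * (z ^ 2 - y ^ 2) * (v * w) + y * (x ^ 2 - z ^ 2) * (w * u)
      + z * (y ^ 2 - x ^ 2) * (u * v) = 0) :
    α * (v * w) + β * (w * u) + γ * (u * v) = 0 := by
  have hβ : α * (y * (x ^ 2 - z ^ 2)) = β * (x * (z ^ 2 - y ^ 2)) := by
    apply mul_left_cancel₀ hz
    linear_combination hQ - (y + z) * (z + x) * hP
  have hγ : α * (z * (y ^ 2 - x ^ 2)) = γ * (x * (z ^ 2 - y ^ 2)) := by
    apply mul_left_cancel₀ hy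
    linear_combination (y + z) * (x + y) * hP - hQ
  apply mul_left_cancel₀ (mul_ne_zero hx hyz)
  linear_combination α * h - w * u * hβ - u * v * hγ

theorem generalized_orthocenters_on_cevian_conic
    (A B C P P' Q Q' D E F D₃ E₃ F₃ : Pt) (x y z : ℝ)
    (hABC : AffineIndependent ℝ ![A, B, C])
    (hsum : x + y + z = 1)
    (hPco : P = x • A + y • B + z • C)
    (hx0 : x ≠ 0) (hy0 : y ≠ 0) (hz0 : z ≠ 0)
    (hx1 : x ≠ 1) (hy1 : y ≠ 1) (hz1 : z ≠ 1)
    (hst : x * y + y * z + z * x ≠ 0)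
    (hP' : P' = (y * z / (x * y + y * z + z * x)) • A
        + (x * z / (x * y + y * z + z * x)) • B
        + (x * y / (x * y + y * z + z * x)) • C)
    (hQ : Q = homoth (cent A B C) (-(1 / 2)) P')
    (hQ' : Q' = homoth (cent A B C) (-(1 / 2)) P)
    (hD : Collinear ℝ {A, P, D} ∧ Collinear ℝ {B, C, D})
    (hE : Collinear ℝ {B, P, E} ∧ Collinear ℝ {A, C, E})
    (hF : Collinear ℝ {C, P, F} ∧ Collinear ℝ {A, B, F})
    (hD₃ : Collinear ℝ {A, P', D₃} ∧ Collinear ℝ {B, C, D₃})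
    (hE₃ : Collinear ℝ {B, P', E₃} ∧ Collinear ℝ {A, C, E₃})
    (hF₃ : Collinear ℝ {C, P', F₃} ∧ Collinear ℝ {A, B, F₃})
    (hxy : x ≠ y) (hyz : y ≠ z) (hxz : x ≠ z)
    (O H : Pt)
    (hO : Par (midpoint ℝ B C - O) (D - Q) ∧ Par (midpoint ℝ C A - O) (E - Q) ∧
          Par (midpoint ℝ A B - O) (F - Q))
    (hH : Par (H - A) (D - Q) ∧ Par (H - B) (E - Q) ∧ Par (H - C) (F - Q))
    (O' H' : Pt)
    (hO' : Par (midpoint ℝ B C - O') (D₃ - Q') ∧ Par (midpoint ℝ C A - O') (E₃ - Q') ∧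
           Par (midpoint ℝ A B - O') (F₃ - Q'))
    (hH' : Par (H' - A) (D₃ - Q') ∧ Par (H' - B) (E₃ - Q') ∧ Par (H' - C) (F₃ - Q'))
    (CP : Set Pt) (Z : Pt)
    (hCPc : IsConic CP) (hACP : A ∈ CP) (hBCP : B ∈ CP) (hCCP : C ∈ CP)
    (hPCP : P ∈ CP) (hQCP : Q ∈ CP)
    (hCPuniq : ∀ S : Set Pt, IsConic S → A ∈ S → B ∈ S → C ∈ S → P ∈ S → Q ∈ S → S = CP)
    (hZ : IsCenterOf Z CP) (hZuniq : ∀ W : Pt, IsCenterOf W CP → W = Z) :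
    H ∈ CP ∧ H' ∈ CP := by
  have hΔ := cross_ne_zero_of_affineIndependent hABC
  obtain ⟨c, -, rfl⟩ := hCPc
  simp only [Set.mem_ofPred_eq] at hACP hBCP hCCP hPCP hQCP ⊢
  obtain ⟨α, β, γ, hq⟩ := exists_circumconic_coeffs hACP hBCP hCCP
  set s := x * y + y * z + z * x with hs
  have hsum' : y * z / s + x * z / s + x * y / s = 1 := by
    field_simp
    rw [hs]
    ring
  have hQbary : Q = (x * (y + z) / (2 * s)) • A + (y * (z + x) / (2 * s)) • B
      + (z * (x + y) / (2 * s)) • C := by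
    have hx : x * (y + z) / (2 * s) = (1 - y * z / s) / 2 := by field_simp; rw [hs]; ring
    have hy : y * (z + x) / (2 * s) = (1 - x * z / s) / 2 := by field_simp; rw [hs]; ring
    have hz : z * (x + y) / (2 * s) = (1 - x * y / s) / 2 := by field_simp; rw [hs]; ring
    rw [hQ, hP', hx, hy, hz, homoth, cent]
    module
  have hPeq : α * (y * z) + β * (z * x) + γ * (x * y) = 0 := by
    rw [← hq x y z hsum, ← hPco, hPCP]
  have hQeq : α * (y * (z + x) * (z * (x + y))) + β * (z * (x + y) * (x * (y + z)))
      + γ * (x * (y + z) * (y * (z + x))) = 0 := by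
    have h := hq (x * (y + z) / (2 * s)) (y * (z + x) / (2 * s)) (z * (x + y) / (2 * s))
      (by field_simp; rw [hs]; ring)
    rw [← hQbary, hQCP] at h
    field_simp at h
    linear_combination -h
  have hzy : z ^ 2 - y ^ 2 ≠ 0 := by
    rw [sq_sub_sq]
    exact mul_ne_zero (fun h ↦ hx1 (by linarith)) (sub_ne_zero.mpr hyz.symm)
  obtain ⟨u, v, w, huvw, hHbary⟩ := exists_barycentric hΔ H
  obtain ⟨u', v', w', huvw', hHbary'⟩ := exists_barycentric hΔ H'
  obtain ⟨h₁, h₂, h₃⟩ := barycentric_orthocenter hΔ hsum hPco hsum' hP'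
    (by field_simp; rw [hs]; ring) (by field_simp; rw [hs]; ring)
    (by field_simp; rw [hs]; ring) hQ hD hE hF huvw hHbary hH
  have hs' : y * z / s * (x * z / s) + x * z / s * (x * y / s) + x * y / s * (y * z / s)
      = x * y * z / s ^ 2 := by
    field_simp
    linear_combination hsum
  obtain ⟨k₁, k₂, k₃⟩ := barycentric_orthocenter hΔ hsum' hP' hsum hPco
    (by rw [hs']; field_simp) (by rw [hs']; field_simp) (by rw [hs']; field_simp)
    hQ' hD₃ hE₃ hF₃ huvw' hHbary' hH'
  rw [hs'] at k₁ k₂ k₃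
  constructor
  · rw [hHbary, hq u v w huvw]
    refine circumconic_eq_zero hx0 hy0 hz0 hzy hPeq hQeq ?_
    linear_combination -u * h₁ - v * h₂ - w * h₃
  · rw [hHbary', hq u' v' w' huvw']
    refine circumconic_eq_zero hx0 hy0 hz0 hzy hPeq hQeq ?_
    field_simp at k₁ k₂ k₃
    linear_combination y * z * u' * k₁ + z * x * v' * k₂ + x * y * w' * k₃
end
end

section
/- Assume the generalized circumcenter O is not the midpoint of any side of ABC, so that H does not coincide with any vertex. Then the complement K(C̃_O) is the nine-point conic N_H of the quadrangle ABCH; N_H is also the image of C̃_O under the homothety with center H and ratio 1/2; and the center of N_H is the midpoint N of segment HO. -/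
noncomputable section

/-- The determinant of two plane vectors. -/
def det₂ (u v : Pt) : ℝ := u.1 * v.2 - u.2 * v.1

theorem det₂_ne_zero_of_affineIndependent {A B C : Pt}
    (h : AffineIndependent ℝ ![A, B, C]) : det₂ (B - A) (C - A) ≠ 0 := by
  rw [affineIndependent_iff_not_collinear_set] at h
  intro hdet
  apply h
  rw [collinear_iff_of_mem (p₀ := A) (by simp)]
  by_cases hu : B - A = 0
  · refine ⟨C - A, ?_⟩
    rintro p (rfl | rfl | rfl)
    · exact ⟨0, by simp⟩
    · exact ⟨0, by simpa [sub_eq_zero] using hu⟩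
    · exact ⟨1, by simp⟩
  · refine ⟨B - A, ?_⟩
    rintro p (rfl | rfl | rfl)
    · exact ⟨0, by simp⟩
    · exact ⟨1, by simp⟩
    · simp only [det₂, Prod.fst_sub, Prod.snd_sub] at hdet
      by_cases h1 : B.1 - A.1 = 0
      · have h2 : B.2 - A.2 ≠ 0 := fun h2 => hu (Prod.ext h1 h2)
        refine ⟨(p.2 - A.2) / (B.2 - A.2), Prod.ext ?_ ?_⟩ <;> simp <;> field_simp
        · linear_combination -hdet
        · ring
      · refine ⟨(p.1 - A.1) / (B.1 - A.1), Prod.ext ?_ ?_⟩ <;> simp <;> field_simp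
        · ring
        · linear_combination hdet

theorem Collinear.exists_eq_add_smul_sub {X Y Z : Pt} (h : Collinear ℝ {X, Y, Z})
    (hXY : Y ≠ X) : ∃ t : ℝ, Z = X + t • (Y - X) := by
  rw [collinear_iff_of_mem (p₀ := X) (by simp)] at h
  obtain ⟨v, hv⟩ := h
  obtain ⟨r, hr⟩ := hv Y (by simp)
  obtain ⟨s, hs⟩ := hv Z (by simp)
  simp only [vadd_eq_add] at hr hs
  have hr0 : r ≠ 0 := by
    rintro rfl
    exact hXY (by simpa using hr)
  refine ⟨s / r, ?_⟩
  rw [hs, hr, add_sub_cancel_right, smul_smul, div_mul_cancel₀ _ hr0, add_comm]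

theorem Par.det₂_eq_zero {u v : Pt} (h : Par u v) : det₂ u v = 0 := by
  obtain ⟨t, rfl | rfl⟩ := h <;> simp [det₂] <;> ring

theorem eq_zero_of_det₂_eq_zero {w d e : Pt} (hde : det₂ d e ≠ 0) (hd : det₂ w d = 0)
    (he : det₂ w e = 0) : w = 0 := by
  simp only [det₂] at *
  refine Prod.ext (mul_left_cancel₀ hde ?_) (mul_left_cancel₀ hde ?_) <;>
    simp only [Prod.fst_zero, Prod.snd_zero, mul_zero]
  · linear_combination d.1 * he - e.1 * hd
  · linear_combination d.2 * he - e.2 * hd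

/-- The trace on `BC` of the point with normalized barycentric coordinates `(x, y, z)`. -/
theorem smul_trace_eq {A B C P D : Pt} {x y z : ℝ} (hA : det₂ (B - A) (C - A) ≠ 0)
    (hsum : x + y + z = 1) (hP : P = x • A + y • B + z • C) (hy : y ≠ 0)
    (hD : Collinear ℝ {A, P, D}) (hD' : Collinear ℝ {B, C, D}) :
    (y + z) • D = y • B + z • C := by
  have hPA : P ≠ A := by
    intro h
    have h1 := congrArg Prod.fst (hP.symm.trans h)
    have h2 := congrArg Prod.snd (hP.symm.trans h)
    simp at h1 h2
    obtain rfl : x = 1 - y - z := by linarith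
    refine mul_ne_zero hy hA ?_
    simp only [det₂, Prod.fst_sub, Prod.snd_sub]
    linear_combination (C.2 - A.2) * h1 - (C.1 - A.1) * h2
  have hCB : C ≠ B := by
    rintro rfl
    exact hA (by simp only [det₂]; ring)
  obtain ⟨t, ht⟩ := hD.exists_eq_add_smul_sub hPA
  obtain ⟨r, hr⟩ := hD'.exists_eq_add_smul_sub hCB
  have h1 := congrArg Prod.fst (ht.symm.trans hr)
  have h2 := congrArg Prod.snd (ht.symm.trans hr)
  obtain rfl : x = 1 - y - z := by linarith
  rw [hP] at h1 h2
  simp at h1 h2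
  have htz : t * z = r := by
    refine mul_right_cancel₀ hA ?_
    simp only [det₂, Prod.fst_sub, Prod.snd_sub]
    linear_combination (B.1 - A.1) * h2 - (B.2 - A.2) * h1
  have hty : t * y = 1 - r := by
    refine mul_right_cancel₀ hA ?_
    simp only [det₂, Prod.fst_sub, Prod.snd_sub]
    linear_combination (C.2 - A.2) * h1 - (C.1 - A.1) * h2
  have hrz : r * (y + z) = z := by linear_combination z * hty - y * htz
  rw [hr]
  refine Prod.ext ?_ ?_ <;> simp
  · linear_combination (C.1 - B.1) * hrz
  · linear_combination (C.2 - B.2) * hrz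

theorem qval_reflection (c : Fin 6 → ℝ) (O p : Pt) (hO : qgrad c O = 0) :
    qval c ((2 : ℝ) • O - p) = qval c p := by
  have h1 := congrArg Prod.fst hO
  have h2 := congrArg Prod.snd hO
  simp only [qgrad, Prod.fst_zero, Prod.snd_zero] at h1 h2
  simp [qval]
  linear_combination 2 * (O.1 - p.1) * h1 + 2 * (O.2 - p.2) * h2

/-- A circumconic that is the only one with center `O` has an equation with vanishing gradient
at `O`. -/
theorem exists_equation_qgrad_eq_zero {A B C O : Pt} {S : Set Pt} (hS : IsConic S)
    (hA : A ∈ S) (hB : B ∈ S) (hC : C ∈ S) (hO : IsCenterOf O S)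
    (huniq : ∀ T : Set Pt, IsConic T → A ∈ T → B ∈ T → C ∈ T → IsCenterOf O T → T = S) :
    ∃ c : Fin 6 → ℝ, ¬(c 0 = 0 ∧ c 1 = 0 ∧ c 2 = 0) ∧ qgrad c O = 0 ∧
      S = {p | qval c p = 0} := by
  obtain ⟨c, hc, rfl⟩ := hS
  let c' : Fin 6 → ℝ := ![c 0, c 1, c 2, -(2 * c 0 * O.1 + c 1 * O.2),
    -(c 1 * O.1 + 2 * c 2 * O.2),
    c 5 + (2 * c 0 * O.1 + c 1 * O.2 + c 3) * O.1 + (c 1 * O.1 + 2 * c 2 * O.2 + c 4) * O.2]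
  have hgrad : qgrad c' O = 0 := by
    refine Prod.ext ?_ ?_ <;> simp [qgrad, c']
  have hval : ∀ p, 2 * qval c' p = qval c p + qval c ((2 : ℝ) • O - p) := by
    intro p
    simp [qval, c']
    ring
  have hmem : ∀ p, qval c p = 0 → qval c' p = 0 := by
    intro p hp
    have := hval p
    have h2 : qval c ((2 : ℝ) • O - p) = 0 := hO p hp
    linarith
  have hc' : ¬(c' 0 = 0 ∧ c' 1 = 0 ∧ c' 2 = 0) := hc
  refine ⟨c', hc', hgrad, (huniq _ ⟨c', hc', rfl⟩ (hmem A hA) (hmem B hB) (hmem C hC) ?_).symm⟩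
  intro p hp
  exact (qval_reflection c' O p hgrad).trans hp

/-- The anticomplement of the foot on `BC` of the cevian through `H = A + B + C - 2 O` lies on the
circumconic with center `O`. -/
theorem qval_anticomplement_foot (c : Fin 6 → ℝ) {A B C O H X : Pt} (hO : qgrad c O = 0)
    (hA : qval c A = 0) (hB : qval c B = 0) (hC : qval c C = 0)
    (hH : H = A + B + C - (2 : ℝ) • O) (hHA : H ≠ A) (hBC : C ≠ B)
    (hX : Collinear ℝ {A, H, X}) (hX' : Collinear ℝ {B, C, X}) :
    qval c (A + B + C - (2 : ℝ) • X) = 0 := by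
  obtain ⟨s, hs⟩ := hX.exists_eq_add_smul_sub hHA
  obtain ⟨r, hr⟩ := hX'.exists_eq_add_smul_sub hBC
  have h1 := congrArg Prod.fst (hs.symm.trans hr)
  have h2 := congrArg Prod.snd (hs.symm.trans hr)
  have g1 := congrArg Prod.fst hO
  have g2 := congrArg Prod.snd hO
  rw [hH] at h1 h2
  rw [hr]
  simp [qval, qgrad] at *
  have hc3 : c 3 = -(2 * c 0 * O.1 + c 1 * O.2) := by linarith
  have hc4 : c 4 = -(c 1 * O.1 + 2 * c 2 * O.2) := by linarith
  rw [hc3, hc4] at hA hB hC ⊢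
  linear_combination hA + (1 - 2 * r) * (1 - 2 * s) * (hC - hB)
    + (1 - 2 * r) * (2 * c 0 * (C.1 - B.1) + c 1 * (C.2 - B.2)) * h1
    + (1 - 2 * r) * (c 1 * (C.1 - B.1) + 2 * c 2 * (C.2 - B.2)) * h2

theorem isConic_image_homoth (Z : Pt) {S : Set Pt} (hS : IsConic S) :
    IsConic (homoth Z (-(1 / 2)) '' S) := by
  obtain ⟨c, hc, rfl⟩ := hS
  refine ⟨![4 * c 0, 4 * c 1, 4 * c 2, -2 * (2 * c 0 * (3 * Z.1) + c 1 * (3 * Z.2) + c 3),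
    -2 * (c 1 * (3 * Z.1) + 2 * c 2 * (3 * Z.2) + c 4), qval c ((3 : ℝ) • Z)], ?_, ?_⟩
  · simpa using hc
  · ext p
    simp only [Set.mem_image, Set.mem_ofPred_eq]
    constructor
    · rintro ⟨q, hq, rfl⟩
      rw [← hq]
      simp [qval, homoth]
      ring
    · intro hp
      refine ⟨(3 : ℝ) • Z - (2 : ℝ) • p, ?_, ?_⟩
      · rw [← hp]
        simp [qval]
        ring
      · simp only [homoth]
        module

theorem mem_image_complement {A B C X : Pt} {S : Set Pt}
    (h : A + B + C - (2 : ℝ) • X ∈ S) : X ∈ homoth (cent A B C) (-(1 / 2)) '' S := by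
  refine ⟨_, h, ?_⟩
  simp only [homoth, cent]
  module

theorem midpoint_eq_half_smul (X Y : Pt) : midpoint ℝ X Y = (2⁻¹ : ℝ) • (X + Y) := by
  rw [midpoint_eq_smul_add, invOf_eq_inv]

/-- The generalized orthocenter is the anticomplement of the generalized circumcenter. -/
theorem orthocenter_eq {A B C P P' Q D E O H : Pt} {x y z : ℝ}
    (hABC : det₂ (B - A) (C - A) ≠ 0) (hsum : x + y + z = 1)
    (hPco : P = x • A + y • B + z • C)
    (hx0 : x ≠ 0) (hy0 : y ≠ 0) (hz0 : z ≠ 0) (hx1 : x ≠ 1) (hy1 : y ≠ 1)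
    (hst : x * y + y * z + z * x ≠ 0)
    (hP' : P' = (y * z / (x * y + y * z + z * x)) • A
        + (x * z / (x * y + y * z + z * x)) • B
        + (x * y / (x * y + y * z + z * x)) • C)
    (hQ : Q = homoth (cent A B C) (-(1 / 2)) P')
    (hD : Collinear ℝ {A, P, D} ∧ Collinear ℝ {B, C, D})
    (hE : Collinear ℝ {B, P, E} ∧ Collinear ℝ {A, C, E})
    (hOD : Par (midpoint ℝ B C - O) (D - Q)) (hOE : Par (midpoint ℝ C A - O) (E - Q))
    (hHD : Par (H - A) (D - Q)) (hHE : Par (H - B) (E - Q)) :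
    H = A + B + C - (2 : ℝ) • O := by
  have hDeq := smul_trace_eq hABC hsum hPco hy0 hD.1 hD.2
  have hBAC : det₂ (A - B) (C - B) ≠ 0 := by
    intro h
    apply hABC
    simp only [det₂, Prod.fst_sub, Prod.snd_sub] at h ⊢
    linear_combination -h
  have hEeq := smul_trace_eq (x := y) (y := x) (z := z) hBAC (by linarith)
    (by rw [hPco]; abel) hx0 hE.1 hE.2
  have hyz : y + z ≠ 0 := fun h => hx1 (by linarith)
  have hxz : x + z ≠ 0 := fun h => hy1 (by linarith)
  set s := x * y + y * z + z * x with hs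
  have hQeq : (2 * s) • Q = (x * (y + z)) • A + (y * (x + z)) • B + (z * (x + y)) • C := by
    rw [hQ, hP']
    refine Prod.ext ?_ ?_ <;> simp [homoth, cent] <;> field_simp <;> rw [hs] <;> ring
  have hDQ : (2 * s * (y + z)) • (D - Q)
      = (y * (s - z ^ 2)) • (B - A) + (z * (s - y ^ 2)) • (C - A) := by
    have : (2 * s * (y + z)) • (D - Q) = (2 * s) • ((y + z) • D) - (y + z) • ((2 * s) • Q) := by
      module
    rw [this, hDeq, hQeq, hs]
    module
  have hEQ : (2 * s * (x + z)) • (E - Q)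
      = (-(y * (x + z) ^ 2)) • (B - A) + (z * (s - x ^ 2)) • (C - A) := by
    have : (2 * s * (x + z)) • (E - Q) = (2 * s) • ((x + z) • E) - (x + z) • ((2 * s) • Q) := by
      module
    rw [this, hEeq, hQeq, hs]
    module
  have hdet : det₂ (D - Q) (E - Q) ≠ 0 := by
    have key : (2 * s * (y + z)) * (2 * s * (x + z)) * det₂ (D - Q) (E - Q)
        = 4 * x * y * z ^ 2 * s * det₂ (B - A) (C - A) := by
      have d1 := congrArg Prod.fst hDQ
      have d2 := congrArg Prod.snd hDQ
      have e1 := congrArg Prod.fst hEQ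
      have e2 := congrArg Prod.snd hEQ
      simp only [det₂, Prod.smul_fst, Prod.smul_snd, Prod.fst_sub, Prod.snd_sub, Prod.fst_add,
        Prod.snd_add, smul_eq_mul] at d1 d2 e1 e2 ⊢
      linear_combination (2 * s * (x + z) * (E.2 - Q.2)) * d1
        - (2 * s * (x + z) * (E.1 - Q.1)) * d2
        + (y * (s - z ^ 2) * (B.1 - A.1) + z * (s - y ^ 2) * (C.1 - A.1)) * e2
        - (y * (s - z ^ 2) * (B.2 - A.2) + z * (s - y ^ 2) * (C.2 - A.2)) * e1
    intro h
    rw [h, mul_zero] at key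
    have : 4 * x * y * z ^ 2 * s ≠ 0 := by positivity
    exact mul_ne_zero this hABC key.symm
  have hV : A + B + C - (2 : ℝ) • O - H = 0 := by
    have h1 := hOD.det₂_eq_zero
    have h2 := hOE.det₂_eq_zero
    have h3 := hHD.det₂_eq_zero
    have h4 := hHE.det₂_eq_zero
    rw [midpoint_eq_half_smul] at h1 h2
    refine eq_zero_of_det₂_eq_zero hdet ?_ ?_ <;> simp [det₂] at *
    · linear_combination 2 * h1 - h3
    · linear_combination 2 * h2 - h4
  exact (sub_eq_zero.mp hV).symm

theorem complement_of_circumconic_is_nine_point_conic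
    (A B C P P' Q Q' D E F D₃ E₃ F₃ : Pt) (x y z : ℝ)
    (hABC : AffineIndependent ℝ ![A, B, C])
    (hsum : x + y + z = 1)
    (hPco : P = x • A + y • B + z • C)
    (hx0 : x ≠ 0) (hy0 : y ≠ 0) (hz0 : z ≠ 0)
    (hx1 : x ≠ 1) (hy1 : y ≠ 1) (hz1 : z ≠ 1)
    (hst : x * y + y * z + z * x ≠ 0)
    (hP' : P' = (y * z / (x * y + y * z + z * x)) • A
        + (x * z / (x * y + y * z + z * x)) • B
        + (x * y / (x * y + y * z + z * x)) • C)
    (hQ : Q = homoth (cent A B C) (-(1 / 2)) P')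
    (hQ' : Q' = homoth (cent A B C) (-(1 / 2)) P)
    (hD : Collinear ℝ {A, P, D} ∧ Collinear ℝ {B, C, D})
    (hE : Collinear ℝ {B, P, E} ∧ Collinear ℝ {A, C, E})
    (hF : Collinear ℝ {C, P, F} ∧ Collinear ℝ {A, B, F})
    (hD₃ : Collinear ℝ {A, P', D₃} ∧ Collinear ℝ {B, C, D₃})
    (hE₃ : Collinear ℝ {B, P', E₃} ∧ Collinear ℝ {A, C, E₃})
    (hF₃ : Collinear ℝ {C, P', F₃} ∧ Collinear ℝ {A, B, F₃})
    (O H : Pt)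
    (hO : Par (midpoint ℝ B C - O) (D - Q) ∧ Par (midpoint ℝ C A - O) (E - Q) ∧
          Par (midpoint ℝ A B - O) (F - Q))
    (hH : Par (H - A) (D - Q) ∧ Par (H - B) (E - Q) ∧ Par (H - C) (F - Q))
    (hOm1 : O ≠ midpoint ℝ B C) (hOm2 : O ≠ midpoint ℝ C A) (hOm3 : O ≠ midpoint ℝ A B)
    (H₁ H₂ H₃ : Pt)
    (hH₁ : Collinear ℝ {A, H, H₁} ∧ Collinear ℝ {B, C, H₁})
    (hH₂ : Collinear ℝ {B, H, H₂} ∧ Collinear ℝ {A, C, H₂})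
    (hH₃ : Collinear ℝ {C, H, H₃} ∧ Collinear ℝ {A, B, H₃})
    (CO : Set Pt)
    (hCO : IsConic CO) (hACO : A ∈ CO) (hBCO : B ∈ CO) (hCCO : C ∈ CO)
    (hOcen : IsCenterOf O CO)
    (hCOuniq : ∀ S : Set Pt, IsConic S → A ∈ S → B ∈ S → C ∈ S → IsCenterOf O S → S = CO) :
    (H ≠ A ∧ H ≠ B ∧ H ≠ C) ∧
    IsConic (homoth (cent A B C) (-(1 / 2)) '' CO) ∧
    midpoint ℝ B C ∈ homoth (cent A B C) (-(1 / 2)) '' CO ∧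
    midpoint ℝ C A ∈ homoth (cent A B C) (-(1 / 2)) '' CO ∧
    midpoint ℝ A B ∈ homoth (cent A B C) (-(1 / 2)) '' CO ∧
    midpoint ℝ A H ∈ homoth (cent A B C) (-(1 / 2)) '' CO ∧
    midpoint ℝ B H ∈ homoth (cent A B C) (-(1 / 2)) '' CO ∧
    midpoint ℝ C H ∈ homoth (cent A B C) (-(1 / 2)) '' CO ∧
    H₁ ∈ homoth (cent A B C) (-(1 / 2)) '' CO ∧
    H₂ ∈ homoth (cent A B C) (-(1 / 2)) '' CO ∧
    H₃ ∈ homoth (cent A B C) (-(1 / 2)) '' CO ∧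
    homoth (cent A B C) (-(1 / 2)) '' CO = homoth H (1 / 2) '' CO ∧
    IsCenterOf (midpoint ℝ H O) (homoth (cent A B C) (-(1 / 2)) '' CO) := by
  have hdet := det₂_ne_zero_of_affineIndependent hABC
  have hHeq : H = A + B + C - (2 : ℝ) • O :=
    orthocenter_eq hdet hsum hPco hx0 hy0 hz0 hx1 hy1 hst hP' hQ hD hE hO.1 hO.2.1 hH.1 hH.2.1
  have hBC : C ≠ B := by
    rintro rfl
    exact hdet (by simp only [det₂]; ring)
  have hAC : C ≠ A := by
    rintro rfl
    exact hdet (by simp [det₂])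
  have hAB : B ≠ A := by
    rintro rfl
    exact hdet (by simp [det₂])
  have hO2 : (2 : ℝ) • O = A + B + C - H := by rw [hHeq]; abel
  have hO_eq : O = (2⁻¹ : ℝ) • (A + B + C - H) := by rw [← hO2]; module
  have hHA : H ≠ A := by
    rintro rfl
    exact hOm1 (by rw [midpoint_eq_half_smul, hO_eq]; module)
  have hHB : H ≠ B := by
    rintro rfl
    exact hOm2 (by rw [midpoint_eq_half_smul, hO_eq]; module)
  have hHC : H ≠ C := by
    rintro rfl
    exact hOm3 (by rw [midpoint_eq_half_smul, hO_eq]; module)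
  obtain ⟨c, -, hgrad, hCOeq⟩ :=
    exists_equation_qgrad_eq_zero hCO hACO hBCO hCCO hOcen hCOuniq
  have hcA : qval c A = 0 := by rwa [hCOeq] at hACO
  have hcB : qval c B = 0 := by rwa [hCOeq] at hBCO
  have hcC : qval c C = 0 := by rwa [hCOeq] at hCCO
  refine ⟨⟨hHA, hHB, hHC⟩, isConic_image_homoth _ hCO, ?_, ?_, ?_, ?_, ?_, ?_, ?_, ?_, ?_, ?_, ?_⟩
  · apply mem_image_complement
    convert hACO using 1
    rw [midpoint_eq_half_smul]
    module
  · apply mem_image_complement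
    convert hBCO using 1
    rw [midpoint_eq_half_smul]
    module
  · apply mem_image_complement
    convert hCCO using 1
    rw [midpoint_eq_half_smul]
    module
  · apply mem_image_complement
    convert hOcen A hACO using 1
    rw [midpoint_eq_half_smul, hO2]
    module
  · apply mem_image_complement
    convert hOcen B hBCO using 1
    rw [midpoint_eq_half_smul, hO2]
    module
  · apply mem_image_complement
    convert hOcen C hCCO using 1
    rw [midpoint_eq_half_smul, hO2]
    module
  · apply mem_image_complement
    rw [hCOeq]
    exact qval_anticomplement_foot c hgrad hcA hcB hcC hHeq hHA hBC hH₁.1 hH₁.2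
  · apply mem_image_complement
    rw [hCOeq, add_comm A B]
    exact qval_anticomplement_foot c hgrad hcB hcA hcC (by rw [hHeq, add_comm A B]) hHB hAC
      hH₂.1 hH₂.2
  · apply mem_image_complement
    have hperm : A + B + C = C + A + B := by abel
    rw [hCOeq, hperm]
    exact qval_anticomplement_foot c hgrad hcC hcA hcB (by rw [hHeq, hperm]) hHC hAB
      hH₃.1 hH₃.2
  · have hmap : ∀ X, homoth (cent A B C) (-(1 / 2)) X = homoth H (1 / 2) ((2 : ℝ) • O - X) := by
      intro X
      rw [hO2]
      simp only [homoth, cent]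
      module
    ext p
    constructor
    · rintro ⟨X, hX, rfl⟩
      exact ⟨_, hOcen X hX, (hmap X).symm⟩
    · rintro ⟨X, hX, rfl⟩
      exact ⟨_, hOcen X hX, by rw [hmap, sub_sub_cancel]⟩
  · rintro _ ⟨X, hX, rfl⟩
    refine ⟨_, hOcen X hX, ?_⟩
    rw [midpoint_eq_half_smul, hO_eq]
    simp only [homoth, cent]
    module
end
end
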